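/- Let (R, m) be a Noetherian local ring and M a finitely generated R-module of dimension d, and let x = x_1, ..., x_d be a system of parameters of M. Then the intersection over all n > 0 of the limit closures (x_1^n, ..., x_d^n)^lim_M equals the unmixed component U_M(0) of M. -/

import Mathlib

/-!
The inclusion of `U` in each limit closure holds because `A = R / Ann U` has dimension less than
`d`: in such a ring any `d` elements satisfy a relation
`(a₁⋯a_d) ^ k ∈ (a₁ ^ (k + 1), …, a_d ^ (k + 1))` (`exists_prod_pow_mem`), and applying it to the
powers `xᵢ ^ n` and multiplying with an element of `U` gives membership in the limit closure.

For the converse, the intersection `N` of the limit closures has to be shown to have dimension less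
than `d`; maximality of `U` then gives `N ≤ U`. Membership in a limit closure of `x ^ k` is the
vanishing of the class of `m / (x₁⋯x_d) ^ k` in the top Čech (local) cohomology of `M`. The main
result `supportDim_lt_of_lim` is an induction on the number of elements that uses the Čech complex
in the following way. Let the sequence be `a, l`.

* The Čech complex of `a, l` is the cone of `K → K_a`, where `K` is the Čech complex of `l`. If
  `M / (a, l) M` has finite length, then the cohomology of `K(a, l) ⊗ M` is Artinian: it is
  `a`-power torsion, and by Melkersson's criterion and the long exact sequences it suffices to treat
  modules killed by `a`, for which the localization vanishes (`CechModel.cons_artin`).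
* By the descending chain condition there is `c` such that `a ^ c` sends each `a`-power torsion
  class of the cohomology of `K ⊗ M` into the classes divisible by all powers of `a`
  (`cone_stable`).
* If `y` lies in all limit closures for `a, l`, it follows that the image of `a ^ c y` in
  `M / a ^ n M` lies in all limit closures for `l`, for each `n` (`lim_step`).
* Artin–Rees, the induction hypothesis for `M / a ^ n M` and `dim M / aM ≤ d - 1` then bound the
  dimension of `N`.

The Čech complex is encoded as an ungraded flat differential module together with the data
attached to its top degree, collected in the structure `CechModel`.
-/

open IsLocalRing

/-- The limit closure `(x)^lim_M = ⋃_{n>0} ((x₁^{n+1}, …, x_r^{n+1})M :_M (x₁⋯x_r)^n)` of a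
sequence `x = x₁, …, x_r` of elements of `R` in the module `M`; the union of the increasing
family of submodules is expressed as a supremum. -/
def limitClosure {R : Type*} [CommRing R] {M : Type*} [AddCommGroup M] [Module R M]
    {r : ℕ} (x : Fin r → R) : Submodule R M :=
  ⨆ n : ℕ, (Ideal.span (Set.range fun i => x i ^ (n + 2)) • (⊤ : Submodule R M)).comap
    (LinearMap.lsmul R M ((∏ i, x i) ^ (n + 1)))

/-- The dimension of a module `M`: the Krull dimension of `R ⧸ Ann M`. -/
noncomputable def moduleDim (R M : Type*) [CommRing R] [AddCommGroup M] [Module R M] :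
    WithBot ℕ∞ :=
  ringKrullDim (R ⧸ Module.annihilator R M)

/-- A system of parameters of a `d`-dimensional module `M` over a Noetherian local ring:
a sequence of `d` elements of the maximal ideal such that `M/(x₁, …, x_d)M` has finite
length. -/
def IsSystemOfParameters {R : Type*} [CommRing R] [IsLocalRing R] (M : Type*)
    [AddCommGroup M] [Module R M] {d : ℕ} (x : Fin d → R) : Prop :=
  (∀ i, x i ∈ maximalIdeal R) ∧
    IsFiniteLength R (M ⧸ (Ideal.span (Set.range x) • (⊤ : Submodule R M)))

universe u v
open TensorProduct

/-! ### Monomial relations and Krull dimension -/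

/-- The ideal generated by the `k`-th powers of the entries of the list `l`. -/
def powIdeal {R : Type u} [CommRing R] (l : List R) (k : ℕ) : Ideal R :=
  Ideal.ofList (l.map (· ^ k))

lemma powIdeal_cons {R : Type u} [CommRing R] (a : R) (l : List R) (k : ℕ) :
    powIdeal (a :: l) k = Ideal.span {a ^ k} ⊔ powIdeal l k := by
  simp [powIdeal, Ideal.ofList_cons]

lemma prod_pow_mul_mem {R : Type u} [CommRing R] (l : List R) (k s : ℕ) {y : R}
    (hy : y ∈ powIdeal l k) : l.prod ^ s * y ∈ powIdeal l (k + s) := by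
  have : powIdeal l k ≤ (powIdeal l (k + s)).colon {l.prod ^ s} := by
    refine Ideal.span_le.2 ?_
    intro z hz
    simp only [List.mem_map, Set.mem_ofPred_eq] at hz
    obtain ⟨b, hb, rfl⟩ := hz
    obtain ⟨c, hc⟩ := List.dvd_prod hb
    have h1 : b ^ (k + s) ∈ powIdeal l (k + s) :=
      Ideal.subset_span (by simpa using ⟨b, hb, rfl⟩)
    have : l.prod ^ s * b ^ k = c ^ s * b ^ (k + s) := by rw [hc]; ring
    rw [SetLike.mem_coe, Submodule.mem_colon_singleton, smul_eq_mul, mul_comm, this]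
    exact Ideal.mul_mem_left _ _ h1
  have h2 := this hy
  rwa [Submodule.mem_colon_singleton, smul_eq_mul, mul_comm] at h2

lemma powIdeal_anti {R : Type u} [CommRing R] (l : List R) {j k : ℕ} (h : j ≤ k) :
    powIdeal l k ≤ powIdeal l j := by
  refine Ideal.span_le.2 ?_
  intro z hz
  simp only [List.mem_map, Set.mem_ofPred_eq] at hz
  obtain ⟨b, hb, rfl⟩ := hz
  have hb' : b ^ j ∈ powIdeal l j := Ideal.subset_span (by simpa using ⟨b, hb, rfl⟩)
  rw [← Nat.add_sub_cancel' h, pow_add]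
  exact Ideal.mul_mem_right _ _ hb'

/-- The multiplicative set `{a ^ i * (1 + a * b)}`. Localizing at it removes every maximal ideal:
a prime disjoint from it contains neither `a` nor any `1 + a * b`, so it lies strictly below a
prime containing `a`. -/
def boundaryMonoid {A : Type u} [CommRing A] (a : A) : Submonoid A where
  carrier := {y | ∃ (i : ℕ) (b : A), y = a ^ i * (1 + a * b)}
  one_mem' := ⟨0, 0, by simp⟩
  mul_mem' := by
    rintro _ _ ⟨i, b, rfl⟩ ⟨j, c, rfl⟩
    exact ⟨i + j, b + c + a * b * c, by ring⟩

/-- Localizing at `boundaryMonoid a` lowers the Krull dimension, since each chain of primes of the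
localization extends upwards by one prime containing `a`. -/
lemma ringKrullDim_boundary_lt {A : Type u} [CommRing A] (a : A) (n : ℕ)
    (h : ringKrullDim A < ((n + 1 : ℕ) : WithBot ℕ∞)) :
    ringKrullDim (Localization (boundaryMonoid a)) < (n : WithBot ℕ∞) := by
  by_contra hn
  rw [not_lt] at hn
  obtain ⟨s, hs⟩ := Order.le_krullDim_iff.1 hn
  let g : PrimeSpectrum (Localization (boundaryMonoid a)) → PrimeSpectrum A :=
    PrimeSpectrum.comap (algebraMap A _)
  have hg : StrictMono g := by
    refine Monotone.strictMono_of_injective ?_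
      (PrimeSpectrum.localization_comap_injective _ (boundaryMonoid a))
    intro p q hpq x hx
    exact hpq hx
  let t := s.map g hg
  have hdis : ∀ y ∈ boundaryMonoid a, y ∉ t.last.asIdeal := by
    intro y hy hyt
    have : algebraMap A (Localization (boundaryMonoid a)) y ∈ s.last.asIdeal := by
      simpa [t, g] using hyt
    exact s.last.2.ne_top (Ideal.eq_top_of_isUnit_mem _ this
      (IsLocalization.map_units (Localization (boundaryMonoid a)) (⟨y, hy⟩ : boundaryMonoid a)))
  have hne : t.last.asIdeal ⊔ Ideal.span {a} ≠ ⊤ := by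
    intro htop
    have h1 : (1 : A) ∈ t.last.asIdeal ⊔ Ideal.span {a} := htop ▸ Submodule.mem_top
    obtain ⟨q, hq, w, hw, hqw⟩ := Submodule.mem_sup.1 h1
    obtain ⟨c, rfl⟩ := Ideal.mem_span_singleton'.1 hw
    exact hdis q ⟨0, -c, by rw [← hqw]; ring⟩ hq
  obtain ⟨m, hm, hle⟩ := Ideal.exists_le_maximal _ hne
  have hlt : t.last < (⟨m, hm.isPrime⟩ : PrimeSpectrum A) := by
    refine lt_of_le_of_ne (le_sup_left.trans hle) ?_
    intro heq
    refine hdis a ⟨1, 0, by simp⟩ ?_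
    rw [heq]
    exact hle (Ideal.mem_sup_right (Ideal.mem_span_singleton_self a))
  have := Order.LTSeries.length_le_krullDim (t.snoc _ hlt)
  have h2 : (t.snoc _ hlt).length = n + 1 := by simp [t, hs]
  rw [h2] at this
  exact absurd h (not_lt.2 this)

/-- In a ring of dimension less than `l.length`, some `(a₁⋯a_d) ^ k` lies in
`(a₁ ^ (k + 1), …, a_d ^ (k + 1))`. This is the monomial form of Coquand–Lombardi's description of
Krull dimension, by induction through the boundary localizations; no Noetherian hypothesis is
needed. -/
theorem exists_prod_pow_mem {A : Type u} [CommRing A] (l : List A)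
    (h : ringKrullDim A < (l.length : WithBot ℕ∞)) :
    ∃ k : ℕ, l.prod ^ k ∈ powIdeal l (1 + k) := by
  induction hn : l.length generalizing A l with
  | zero =>
    rcases subsingleton_or_nontrivial A with hA | hA
    · exact ⟨0, by rw [Subsingleton.elim (l.prod ^ 0 : A) 0]; exact Ideal.zero_mem _⟩
    · exact absurd h (not_lt.2 (by simpa [hn] using ringKrullDim_nonneg_of_nontrivial))
  | succ n ih =>
    obtain ⟨a, l, rfl⟩ := List.exists_of_length_succ l hn
    simp only [List.length_cons, Nat.add_right_cancel_iff] at hn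
    let S := boundaryMonoid a
    let φ := algebraMap A (Localization S)
    obtain ⟨k, hk⟩ := ih (l.map φ) (by
      rw [List.length_map]
      exact ringKrullDim_boundary_lt a l.length (by simpa using h)) (by simpa using hn)
    have hmap : powIdeal (l.map φ) (1 + k) = (powIdeal l (1 + k)).map φ := by
      simp [powIdeal, Ideal.map_ofList, List.map_map, Function.comp_def]
    have hpr : (l.map φ).prod ^ k = φ (l.prod ^ k) := by
      rw [map_pow, map_list_prod]
    rw [hmap, hpr] at hk
    obtain ⟨_, ⟨i, b, rfl⟩, hb⟩ := (IsLocalization.algebraMap_mem_map_algebraMap_iff S _ _ _).1 hk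
    refine ⟨k + i, ?_⟩
    rw [powIdeal_cons, List.prod_cons]
    have h1 := Ideal.mul_mem_left _ (a ^ k) (prod_pow_mul_mem l (1 + k) i hb)
    have h2 : -b * l.prod ^ (k + i) * a ^ (1 + (k + i)) ∈ Ideal.span {a ^ (1 + (k + i))} :=
      Ideal.mul_mem_left _ _ (Ideal.mem_span_singleton_self _)
    rw [add_assoc] at h1
    convert add_mem (Ideal.mem_sup_right h1) (Ideal.mem_sup_left h2) using 1
    ring
/-! ### Artinian modules and homology of differential modules -/

section
variable {R : Type*} [CommRing R]

/-- A module that is a quotient of a submodule of an Artinian module is Artinian; the subquotient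
is presented by a correspondence `X ← Y → Z`. -/
lemma isArtinian_of_correspondence {X Y Z : Type*} [AddCommGroup X] [Module R X] [AddCommGroup Y]
    [Module R Y] [AddCommGroup Z] [Module R Z] [IsArtinian R X] (f : Y →ₗ[R] X) (g : Y →ₗ[R] Z)
    (hfg : LinearMap.ker f ≤ LinearMap.ker g) (hg : Function.Surjective g) : IsArtinian R Z := by
  have h1 : IsArtinian R (Y ⧸ LinearMap.ker f) :=
    isArtinian_of_injective ((LinearMap.ker f).liftQ f le_rfl)
      (LinearMap.ker_eq_bot.1 (Submodule.ker_liftQ_eq_bot _ _ _ le_rfl))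
  refine isArtinian_of_surjective _ ((LinearMap.ker f).liftQ g hfg) ?_
  intro z
  obtain ⟨y, rfl⟩ := hg z
  exact ⟨Submodule.Quotient.mk y, by simp⟩

lemma isArtinian_ker_comp {X Y Z : Type*} [AddCommGroup X] [Module R X] [AddCommGroup Y]
    [Module R Y] [AddCommGroup Z] [Module R Z] (f : X →ₗ[R] Y) (g : Y →ₗ[R] Z)
    (hf : IsArtinian R (LinearMap.ker f)) (hg : IsArtinian R (LinearMap.ker g)) :
    IsArtinian R (LinearMap.ker (g ∘ₗ f)) := by
  have hle : LinearMap.ker f ≤ LinearMap.ker (g ∘ₗ f) := LinearMap.ker_le_ker_comp f g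
  refine isArtinian_of_range_eq_ker (Submodule.inclusion hle)
    (f.restrict (p := LinearMap.ker (g ∘ₗ f)) (q := LinearMap.ker g) fun x hx => by simpa using hx) ?_
  ext ⟨x, hx⟩
  simp only [Submodule.range_inclusion, Submodule.mem_comap, Submodule.subtype_apply,
    LinearMap.mem_ker, Subtype.ext_iff, LinearMap.restrict_apply, ZeroMemClass.coe_zero]

/-- Melkersson's criterion for one element: an `a`-power torsion module whose `a`-socle
`{t | a • t = 0}` is Artinian is Artinian. -/
theorem isArtinian_of_torsion {T : Type*} [AddCommGroup T] [Module R T] (a : R)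
    (htors : ∀ t : T, ∃ k : ℕ, a ^ k • t = 0)
    (hS : IsArtinian R (LinearMap.ker (LinearMap.lsmul R T a))) : IsArtinian R T := by
  rw [← monotone_stabilizes_iff_artinian]
  intro W'
  let W : ℕ → Submodule R T := fun j => OrderDual.ofDual (W' j)
  have hW : Antitone W := fun i j h => W'.2 h
  let S := LinearMap.ker (LinearMap.lsmul R T a)
  -- `Q j k` is the part of `S` reached by `a ^ k • W j`
  let Q : ℕ → ℕ → Submodule R S := fun j k =>
    ((W j).map (LinearMap.lsmul R T (a ^ k))).comap S.subtype
  have hmem : ∀ j k (s : S), s ∈ Q j k ↔ ∃ w ∈ W j, a ^ k • w = (s : T) := by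
    intro j k s; simp [Q]
  have hmono : ∀ j j' k k', j ≤ j' → k ≤ k' → Q j' k' ≤ Q j k := by
    intro j j' k k' hj hk s hs
    obtain ⟨w, hw, hws⟩ := (hmem _ _ _).1 hs
    refine (hmem _ _ _).2 ⟨a ^ (k' - k) • w, (W j).smul_mem _ (hW hj hw), ?_⟩
    rw [smul_smul, ← pow_add, Nat.add_sub_cancel' hk, hws]
  have stab : ∀ F : ℕ → Submodule R S, Antitone F → ∃ n, ∀ m, n ≤ m → F n = F m := by
    intro F hF
    exact monotone_stabilizes_iff_artinian.2 hS ⟨fun n => OrderDual.toDual (F n), fun _ _ h => hF h⟩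
  obtain ⟨K, hK⟩ := stab (fun n => Q n n) fun i j h => hmono _ _ _ _ h h
  choose J hJ using fun k => stab (fun n => Q n k) fun i j h => hmono _ _ _ _ h le_rfl
  let N := K + ∑ k ∈ Finset.range K, J k
  have hQ : ∀ m, N ≤ m → ∀ k, Q N k ≤ Q m k := by
    intro m hm k
    by_cases hk : k < K
    · have : J k ≤ N := (Finset.single_le_sum (f := J) (fun _ _ => Nat.zero_le _)
        (Finset.mem_range.2 hk)).trans (Nat.le_add_left _ _)
      rw [← hJ k N this, ← hJ k m (this.trans hm)]
    · rw [not_lt] at hk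
      have hKN : K ≤ N := Nat.le_add_right _ _
      calc Q N k ≤ Q K K := hmono _ _ _ _ hKN hk
        _ = Q (max m k) (max m k) := hK _ (hKN.trans (hm.trans (le_max_left _ _)))
        _ ≤ Q m k := hmono _ _ _ _ (le_max_left _ _) (le_max_right _ _)
  refine ⟨N, fun m hm => ?_⟩
  change W N = W m
  refine le_antisymm ?_ (hW hm)
  suffices h : ∀ r, ∀ w ∈ W N, a ^ r • w = 0 → w ∈ W m by
    intro w hw
    obtain ⟨r, hr⟩ := htors w
    exact h r w hw hr
  intro r
  induction r with
  | zero => intro w _ h; simp at h; simp [h]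
  | succ r ih =>
    intro w hw h
    have hs : a ^ r • w ∈ S := by
      simp only [S, LinearMap.mem_ker, LinearMap.lsmul_apply, smul_smul]
      rw [← pow_succ']; exact h
    obtain ⟨w', hw', hww⟩ := (hmem _ _ _).1 (hQ m hm r ((hmem N r ⟨_, hs⟩).2 ⟨w, hw, rfl⟩))
    have := ih (w - w') (sub_mem hw (hW hm hw')) (by rw [smul_sub, hww]; simp)
    simpa using add_mem this hw'

/-- The homology `ker δ / (im δ ∩ ker δ)` of an ungraded differential module. The intersection with
`ker δ` makes the definition meaningful without a proof of `δ² = 0`. -/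
abbrev Homol {D : Type*} [AddCommGroup D] [Module R D] (δ : D →ₗ[R] D) : Type _ :=
  LinearMap.ker δ ⧸ (LinearMap.range δ).comap (LinearMap.ker δ).subtype

section Homol
variable {A B C : Type*} [AddCommGroup A] [Module R A] [AddCommGroup B] [Module R B]
  [AddCommGroup C] [Module R C] {α : A →ₗ[R] A} {β : B →ₗ[R] B} {γ : C →ₗ[R] C}

/-- The homology class of a cycle. -/
def Homol.mk (x : A) (hx : α x = 0) : Homol α := Submodule.Quotient.mk ⟨x, hx⟩

lemma Homol.mk_surj (z : Homol α) : ∃ x hx, z = Homol.mk (α := α) x hx := by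
  obtain ⟨⟨x, hx⟩, rfl⟩ := Submodule.Quotient.mk_surjective _ z
  exact ⟨x, hx, rfl⟩

lemma Homol.mk_eq_zero {x : A} {hx : α x = 0} : Homol.mk x hx = 0 ↔ ∃ y, α y = x := by
  simp [Homol.mk]

lemma Homol.mk_eq_mk {x y : A} {hx : α x = 0} {hy : α y = 0} :
    Homol.mk x hx = Homol.mk y hy ↔ ∃ z, α z = x - y := by
  simp [Homol.mk, Submodule.Quotient.eq]

lemma Homol.smul_mk (r : R) (x : A) (hx : α x = 0) :
    r • Homol.mk x hx = Homol.mk (α := α) (r • x) (by simp [hx]) := rfl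

/-- The map on homology induced by a map commuting with the differentials. -/
def Homol.map (i : A →ₗ[R] B) (hi : ∀ x, β (i x) = i (α x)) : Homol α →ₗ[R] Homol β :=
  Submodule.mapQ _ _ (i.restrict (p := LinearMap.ker α) (q := LinearMap.ker β)
    fun x hx => by
      rw [LinearMap.mem_ker] at hx ⊢
      rw [hi, hx, map_zero]) (by
    rintro ⟨x, hx⟩ ⟨y, rfl⟩
    exact ⟨i y, by simp [hi]⟩)

lemma Homol.map_mk (i : A →ₗ[R] B) (hi : ∀ x, β (i x) = i (α x)) (x : A) (hx : α x = 0) :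
    Homol.map i hi (Homol.mk x hx) = Homol.mk (i x) (by rw [hi, hx, map_zero]) := rfl

/-- Exactness of `H(A) → H(B) → H(C)`: the kernel of `H(B) → H(C)` is a quotient of `H(A)`. -/
lemma Homol.isArtinian_ker_map_of_exact (i : A →ₗ[R] B) (p : B →ₗ[R] C)
    (hi : ∀ x, β (i x) = i (α x)) (hp : ∀ x, γ (p x) = p (β x)) (hββ : ∀ x, β (β x) = 0)
    (hinj : Function.Injective i) (hex : Function.Exact i p) (hsurj : Function.Surjective p)
    (hA : IsArtinian R (Homol α)) : IsArtinian R (LinearMap.ker (Homol.map p hp)) := by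
  have hle : LinearMap.ker (Homol.map p hp) ≤ LinearMap.range (Homol.map i hi) := by
    intro z hz
    obtain ⟨b, hb, rfl⟩ := z.mk_surj
    rw [LinearMap.mem_ker, Homol.map_mk, Homol.mk_eq_zero] at hz
    obtain ⟨c, hc⟩ := hz
    obtain ⟨b', rfl⟩ := hsurj c
    obtain ⟨a, ha⟩ := (hex (b - β b')).1 (by rw [map_sub, ← hc, hp, sub_self])
    have hαa : α a = 0 := hinj (by rw [← hi, ha, map_sub, hb, hββ, sub_self, map_zero])
    refine ⟨Homol.mk a hαa, ?_⟩
    rw [Homol.map_mk, Homol.mk_eq_mk]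
    exact ⟨-b', by rw [ha, map_neg]; abel⟩
  have : IsArtinian R (LinearMap.range (Homol.map i hi)) :=
    isArtinian_of_surjective _ _ (LinearMap.surjective_rangeRestrict (Homol.map i hi))
  exact isArtinian_of_injective _ (Submodule.inclusion_injective hle)

/-- Exactness of `H(C) → H(A) → H(B)` at `H(A)`: the kernel of `H(A) → H(B)` is a quotient of
`H(C)`. The connecting map is replaced by the correspondence of pairs `(a, b)` with `i a = β b`. -/
lemma Homol.isArtinian_ker_map_of_exact' (i : A →ₗ[R] B) (p : B →ₗ[R] C)
    (hi : ∀ x, β (i x) = i (α x)) (hp : ∀ x, γ (p x) = p (β x)) (hββ : ∀ x, β (β x) = 0)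
    (hinj : Function.Injective i) (hex : Function.Exact i p) (hsurj : Function.Surjective p)
    (hC : IsArtinian R (Homol γ)) : IsArtinian R (LinearMap.ker (Homol.map i hi)) := by
  -- `P` is the module of pairs `(a, b)` with `i a = β b`
  let P : Submodule R (A × B) := LinearMap.ker (i.coprod (-β))
  have hP : ∀ y : P, i y.1.1 = β y.1.2 := by
    intro y
    have := LinearMap.mem_ker.1 y.2
    rwa [LinearMap.coprod_apply, LinearMap.neg_apply, ← sub_eq_add_neg, sub_eq_zero] at this
  have hγ : ∀ y : P, γ (p y.1.2) = 0 := by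
    intro y
    rw [hp, ← hP y]
    exact hex.apply_apply_eq_zero _
  have hα : ∀ y : P, α y.1.1 = 0 := fun y => hinj (by rw [← hi, hP y, hββ, map_zero])
  let f0 : P →ₗ[R] LinearMap.ker γ :=
    (p ∘ₗ LinearMap.snd R A B ∘ₗ P.subtype).codRestrict _ hγ
  let g0 : P →ₗ[R] LinearMap.ker α := (LinearMap.fst R A B ∘ₗ P.subtype).codRestrict _ hα
  let f : P →ₗ[R] Homol γ := Submodule.mkQ _ ∘ₗ f0
  let g1 : P →ₗ[R] Homol α := Submodule.mkQ _ ∘ₗ g0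
  have hf : ∀ y : P, f y = Homol.mk (p y.1.2) (hγ y) := fun _ => rfl
  have hg1 : ∀ y : P, g1 y = Homol.mk y.1.1 (hα y) := fun _ => rfl
  let g : P →ₗ[R] LinearMap.ker (Homol.map i hi) := g1.codRestrict _ (by
    intro y
    rw [LinearMap.mem_ker, hg1, Homol.map_mk, Homol.mk_eq_zero]
    exact ⟨_, (hP y).symm⟩)
  refine isArtinian_of_correspondence f g ?_ ?_
  · intro y hy
    rw [LinearMap.mem_ker, hf, Homol.mk_eq_zero] at hy
    obtain ⟨c, hc⟩ := hy
    obtain ⟨b', rfl⟩ := hsurj c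
    obtain ⟨a, ha⟩ := (hex (y.1.2 - β b')).1 (by rw [map_sub, ← hc, hp, sub_self])
    rw [LinearMap.mem_ker, Subtype.ext_iff]
    change g1 y = 0
    rw [hg1, Homol.mk_eq_zero]
    exact ⟨a, hinj (by rw [← hi, ha, map_sub, hββ, sub_zero, hP])⟩
  · rintro ⟨z, hz⟩
    obtain ⟨a, ha, rfl⟩ := z.mk_surj
    rw [LinearMap.mem_ker, Homol.map_mk, Homol.mk_eq_zero] at hz
    obtain ⟨b, hb⟩ := hz
    refine ⟨⟨(a, b), by simp [P, hb]⟩, ?_⟩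
    rw [Subtype.ext_iff]
    rfl
end Homol

section Cone
variable {D E : Type*} [AddCommGroup D] [Module R D] [AddCommGroup E] [Module R E]
  (δ : D →ₗ[R] D) (ε : E →ₗ[R] E) (lam : D →ₗ[R] E)

/-- The differential of the (shifted, ungraded) mapping cone of `lam : D → E`. -/
def coneDiff : D × E →ₗ[R] D × E :=
  (δ ∘ₗ LinearMap.fst R D E).prod (lam.coprod (-ε))

lemma coneDiff_apply (u : D) (w : E) : coneDiff δ ε lam (u, w) = (δ u, lam u - ε w) := by
  simp [coneDiff, sub_eq_add_neg]

/-- The projection of the homology of the cone onto the homology of its source. -/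
def coneFst : Homol (coneDiff δ ε lam) →ₗ[R] Homol δ :=
  Homol.map (LinearMap.fst R D E) (by rintro ⟨u, w⟩; rw [coneDiff_apply]; rfl)

lemma coneDiff_comp (hδ : ∀ x, δ (δ x) = 0) (hε : ∀ x, ε (ε x) = 0)
    (hlam : ∀ x, ε (lam x) = lam (δ x)) (x : D × E) :
    coneDiff δ ε lam (coneDiff δ ε lam x) = 0 := by
  obtain ⟨u, w⟩ := x
  simp [coneDiff_apply, hδ, hε, hlam]

lemma cone_isArtinian_of_subsingleton [Subsingleton E] (h : IsArtinian R (Homol δ)) :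
    IsArtinian R (Homol (coneDiff δ ε lam)) := by
  refine isArtinian_of_injective (coneFst δ ε lam) ?_
  rw [injective_iff_map_eq_zero]
  intro z hz
  obtain ⟨⟨u, w⟩, hb, rfl⟩ := z.mk_surj
  rw [coneFst, Homol.map_mk, Homol.mk_eq_zero] at hz
  obtain ⟨y, hy⟩ := hz
  rw [Homol.mk_eq_zero]
  exact ⟨(y, 0), by rw [coneDiff_apply]; exact Prod.ext hy (Subsingleton.elim _ _)⟩

/-- The homology of the cone of a localization map `D → D_a` is `a`-power torsion. -/
lemma cone_torsion (a : R) [IsLocalizedModule (Submonoid.powers a) lam]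
    (hlam : ∀ x, ε (lam x) = lam (δ x)) (z : Homol (coneDiff δ ε lam)) :
    ∃ k : ℕ, a ^ k • z = 0 := by
  obtain ⟨⟨u, w⟩, hb, rfl⟩ := z.mk_surj
  rw [coneDiff_apply, Prod.mk_eq_zero, sub_eq_zero] at hb
  obtain ⟨⟨w0, ⟨_, k, rfl⟩⟩, hw⟩ := IsLocalizedModule.surj (Submonoid.powers a) lam w
  simp only [Submonoid.smul_def] at hw
  obtain ⟨⟨_, r, rfl⟩, hr⟩ := (IsLocalizedModule.eq_iff_exists (Submonoid.powers a) lam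
    (x₁ := a ^ k • u) (x₂ := δ w0)).1 (by rw [← hlam, ← hw, map_smul, map_smul, hb.2])
  simp only [Submonoid.smul_def] at hr
  refine ⟨r + k, ?_⟩
  rw [Homol.smul_mk, Homol.mk_eq_zero]
  refine ⟨(a ^ r • w0, 0), ?_⟩
  rw [coneDiff_apply, map_smul, ← hr, map_smul, ← hw, map_zero, sub_zero, smul_smul, smul_smul,
    ← pow_add, Prod.smul_mk]

/-- If the cone of `D → D_a` has Artinian homology, then the chain of its submodules `a ^ n • H`
stabilizes at some `c`; consequently for each `a`-power torsion class `u` of the homology of `D`,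
the class `a ^ c • u` is divisible by all powers of `a`. -/
lemma cone_stable (a : R) [IsLocalizedModule (Submonoid.powers a) lam]
    (hε : ∀ x, ε (lam x) = lam (δ x))
    (hA : IsArtinian R (Homol (coneDiff δ ε lam))) :
    ∃ c : ℕ, ∀ n r : ℕ, ∀ u, δ u = 0 → (∃ b, δ b = a ^ r • u) →
      ∃ h, δ h = 0 ∧ ∃ b, δ b = a ^ c • u - a ^ n • h := by
  let H := Homol (coneDiff δ ε lam)
  obtain ⟨c, hc⟩ := monotone_stabilizes_iff_artinian.2 hA
    ⟨fun n => OrderDual.toDual (LinearMap.range (LinearMap.lsmul R H (a ^ n))), by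
      intro i j hij
      rintro _ ⟨z, rfl⟩
      exact ⟨a ^ (j - i) • z, by simp [smul_smul, ← pow_add, Nat.sub_add_cancel hij]⟩⟩
  have hdiv : ∀ n (z : H), ∃ z' : H, a ^ c • z = a ^ n • z' := by
    intro n z
    have h1 : a ^ c • z ∈ LinearMap.range (LinearMap.lsmul R H (a ^ c)) := ⟨z, rfl⟩
    have h2 : LinearMap.range (LinearMap.lsmul R H (a ^ c)) =
      LinearMap.range (LinearMap.lsmul R H (a ^ (c + n))) := hc (c + n) (Nat.le_add_right _ _)
    rw [h2] at h1
    obtain ⟨z', hz'⟩ := h1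
    refine ⟨a ^ c • z', ?_⟩
    rw [← hz', LinearMap.lsmul_apply, smul_smul, ← pow_add, add_comm]
  refine ⟨c, ?_⟩
  rintro n r u hu ⟨b, hb⟩
  let s : Submonoid.powers a := ⟨a ^ r, r, rfl⟩
  let w : E := IsLocalizedModule.mk' lam b s
  have hw : ε w = lam u := by
    refine IsLocalizedModule.smul_injective lam s ?_
    simp only
    have h1 : s • w = lam b := IsLocalizedModule.mk'_cancel' lam b s
    have h2 : s • ε w = ε (s • w) := by simp only [Submonoid.smul_def, map_smul]
    rw [h2, h1, hε, hb, map_smul]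
    rfl
  obtain ⟨z', hz'⟩ := hdiv n (Homol.mk (α := coneDiff δ ε lam) (u, w)
    (by rw [coneDiff_apply, hu, hw, sub_self]; rfl))
  obtain ⟨⟨h, w'⟩, hh, rfl⟩ := z'.mk_surj
  have hh1 : δ h = 0 := by
    rw [coneDiff_apply, Prod.mk_eq_zero] at hh
    exact hh.1
  refine ⟨h, hh1, ?_⟩
  rw [Homol.smul_mk, Homol.smul_mk, Homol.mk_eq_mk] at hz'
  obtain ⟨⟨b', w''⟩, hb'⟩ := hz'
  rw [coneDiff_apply] at hb'
  exact ⟨b', congrArg Prod.fst hb'⟩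
end Cone

/-! ### Limit closures for lists -/

/-- `Lim l k m` says that `m` lies in the limit closure of the `k`-th powers of the entries of `l`,
in the form `(a₁⋯a_r) ^ s • m ∈ (a₁ ^ (k + s), …, a_r ^ (k + s)) M`. -/
def Lim {M : Type*} [AddCommGroup M] [Module R M] (l : List R) (k : ℕ) (m : M) : Prop :=
  ∃ s : ℕ, l.prod ^ s • m ∈ powIdeal l (k + s) • (⊤ : Submodule R M)

lemma prod_pow_smul_mem {M : Type*} [AddCommGroup M] [Module R M] (l : List R) (k s : ℕ) {y : M}
    (hy : y ∈ powIdeal l k • (⊤ : Submodule R M)) :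
    l.prod ^ s • y ∈ powIdeal l (k + s) • (⊤ : Submodule R M) := by
  induction hy using Submodule.smul_induction_on' with
  | smul r hr n hn =>
    rw [smul_smul]
    exact Submodule.smul_mem_smul (prod_pow_mul_mem l k s hr) hn
  | add x _ y _ hx hy => rw [smul_add]; exact add_mem hx hy

end

lemma krullDimLE_zero_quotient_annihilator {R : Type*} [CommRing R] [IsLocalRing R]
    (M : Type*) [AddCommGroup M] [Module R M]
    (h : IsLocalRing.maximalIdeal R ≤ (Module.annihilator R M).radical) :
    Ring.KrullDimLE 0 (R ⧸ Module.annihilator R M) := by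
  let I := Module.annihilator R M
  change Ring.KrullDimLE 0 (R ⧸ I)
  rw [Ring.krullDimLE_zero_iff]
  intro J hJ
  have hIJ : I ≤ J.comap (Ideal.Quotient.mk I) := by
    intro x hx
    rw [Ideal.mem_comap, Ideal.Quotient.eq_zero_iff_mem.2 hx]
    exact J.zero_mem
  have hle : IsLocalRing.maximalIdeal R ≤ J.comap (Ideal.Quotient.mk I) :=
    h.trans ((Ideal.IsPrime.radical_le_iff (Ideal.comap_isPrime _ J)).2 hIJ)
  have hmax : (J.comap (Ideal.Quotient.mk I)).IsMaximal := by
    rw [← (IsLocalRing.maximalIdeal.isMaximal R).eq_of_le (Ideal.comap_isPrime _ J).ne_top hle]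
    exact IsLocalRing.maximalIdeal.isMaximal R
  rcases Ideal.map_eq_top_or_isMaximal_of_surjective (Ideal.Quotient.mk I)
    Ideal.Quotient.mk_surjective hmax with h1 | h1
  · rw [Ideal.map_comap_of_surjective _ Ideal.Quotient.mk_surjective] at h1
    exact absurd h1 hJ.ne_top
  · rwa [Ideal.map_comap_of_surjective _ Ideal.Quotient.mk_surjective] at h1

lemma isArtinian_of_le_radical_annihilator {R : Type*} [CommRing R] [IsLocalRing R]
    [IsNoetherianRing R] (M : Type*) [AddCommGroup M] [Module R M] [Module.Finite R M]
    (h : IsLocalRing.maximalIdeal R ≤ (Module.annihilator R M).radical) : IsArtinian R M := by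
  let I := Module.annihilator R M
  have h0 : Ring.KrullDimLE 0 (R ⧸ I) := krullDimLE_zero_quotient_annihilator M h
  have hart : IsArtinianRing (R ⧸ I) := IsNoetherianRing.isArtinianRing_of_krullDimLE_zero
  let _ : Module (R ⧸ I) M := Module.quotientAnnihilator
  let e : M →ₛₗ[Ideal.Quotient.mk I] M := ⟨.id _, fun _ _ => rfl⟩
  have : Module.Finite (R ⧸ I) M := by
    have : IsScalarTower R (R ⧸ I) M := ⟨by
      intro r s m
      obtain ⟨s, rfl⟩ := Ideal.Quotient.mk_surjective s
      exact mul_smul r s m⟩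
    exact Module.Finite.of_restrictScalars_finite R _ _
  exact (e.isArtinian_iff_of_bijective Function.bijective_id).2 inferInstance

/-! ### The Čech complex as a flat differential module -/

/-- The features of the Čech complex `⊗ᵢ (R → R_{aᵢ})` of a list `l = [a₁, …, a_r]` that the
argument uses, with the grading forgotten.

`K` is the total module with differential `δ`, and `e` is the projection to the top degree, whose
compatibility with `δ` up to the auxiliary map `f` replaces the grading. The element `τ k` stands
for `1 / (a₁⋯a_r) ^ k` in `R_{a₁⋯a_r}`, so that the top cohomology of `K ⊗ M` is generated by the
classes `τ k ⊗ m`. By `bd` and `zero`, such a class vanishes exactly as prescribed by the limit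
closure `Lim l k`. Finally `artin` says that `K ⊗ M` has Artinian cohomology when `M` is finite and
`M / lM` has finite length. -/
structure CechModel {R : Type u} [CommRing R] [IsLocalRing R] (l : List R) where
  K : Type u
  [instGroup : AddCommGroup K]
  [instModule : Module R K]
  flat : Module.Flat R K
  δ : K →ₗ[R] K
  e : K →ₗ[R] K
  f : K →ₗ[R] K
  τ : ℕ → K
  δ_δ : ∀ y, δ (δ y) = 0
  δ_e : ∀ y, δ (e y) = 0
  e_δ : ∀ y, e (δ y) = δ (f y)
  e_τ : ∀ k, e (τ k) = τ k
  gen : ∀ y, ∃ (k : ℕ) (r : R), e y = r • τ k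
  shift : ∀ k, l.prod • τ (k + 1) = τ k
  bd : ∀ k, ∀ r ∈ powIdeal l k, ∃ y, δ y = r • τ k
  zero : ∀ (M : Type v) [AddCommGroup M] [Module R M] (k : ℕ) (m : M),
    (∃ z, δ.rTensor M z = τ k ⊗ₜ m) → Lim l k m
  artin : ∀ (M : Type v) [AddCommGroup M] [Module R M] [Module.Finite R M],
    IsLocalRing.maximalIdeal R ≤ (Module.annihilator R M ⊔ Ideal.ofList l).radical →
      IsArtinian R (Homol (δ.rTensor M))

attribute [instance] CechModel.instGroup CechModel.instModule CechModel.flat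

namespace CechModel
variable {R : Type u} [CommRing R] [IsLocalRing R] {l : List R} (C : CechModel.{u, v} l)
  {M : Type v} [AddCommGroup M] [Module R M]

lemma shift_pow (k s : ℕ) : l.prod ^ s • C.τ (k + s) = C.τ k := by
  induction s with
  | zero => simp
  | succ s ih => rw [pow_succ, mul_smul, ← add_assoc, C.shift, ih]

lemma tmul_shift (k s : ℕ) (m : M) : C.τ k ⊗ₜ[R] m = C.τ (k + s) ⊗ₜ[R] (l.prod ^ s • m) := by
  rw [← C.shift_pow k s, TensorProduct.smul_tmul]

lemma δ_τ (k : ℕ) : C.δ (C.τ k) = 0 := by rw [← C.e_τ, C.δ_e]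

lemma rTensor_δ_δ (z : C.K ⊗[R] M) : C.δ.rTensor M (C.δ.rTensor M z) = 0 := by
  rw [← LinearMap.comp_apply, ← LinearMap.rTensor_comp,
    show C.δ ∘ₗ C.δ = 0 from LinearMap.ext C.δ_δ]
  simp

lemma rTensor_e_δ (z : C.K ⊗[R] M) :
    C.e.rTensor M (C.δ.rTensor M z) = C.δ.rTensor M (C.f.rTensor M z) := by
  rw [← LinearMap.comp_apply, ← LinearMap.rTensor_comp,
    show C.e ∘ₗ C.δ = C.δ ∘ₗ C.f from LinearMap.ext C.e_δ, LinearMap.rTensor_comp,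
    LinearMap.comp_apply]

lemma rTensor_gen (z : C.K ⊗[R] M) : ∃ (k : ℕ) (q : M), C.e.rTensor M z = C.τ k ⊗ₜ q := by
  induction z using TensorProduct.induction_on with
  | zero => exact ⟨0, 0, by simp⟩
  | tmul y m =>
    obtain ⟨k, r, h⟩ := C.gen y
    exact ⟨k, r • m, by rw [LinearMap.rTensor_tmul, h, TensorProduct.smul_tmul]⟩
  | add x y hx hy =>
    obtain ⟨k, q, hq⟩ := hx
    obtain ⟨k', q', hq'⟩ := hy
    refine ⟨k + k', l.prod ^ k' • q + l.prod ^ k • q', ?_⟩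
    rw [map_add, hq, hq', C.tmul_shift k k', C.tmul_shift k' k, TensorProduct.tmul_add,
      add_comm k' k]

lemma rTensor_gen_ge (n : ℕ) (z : C.K ⊗[R] M) :
    ∃ (s : ℕ) (q : M), C.e.rTensor M z = C.τ (n + s) ⊗ₜ q := by
  obtain ⟨k, q, h⟩ := C.rTensor_gen z
  exact ⟨k, l.prod ^ n • q, by rw [h, C.tmul_shift k n, add_comm]⟩

/-- The Čech complex of the empty list: the ring in degree zero. -/
def nil [IsNoetherianRing R] : CechModel.{u, v} ([] : List R) where
  K := R
  flat := inferInstance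
  δ := 0
  e := LinearMap.id
  f := 0
  τ := fun _ => 1
  δ_δ := by simp
  δ_e := by simp
  e_δ := by simp
  e_τ := by simp
  gen := fun y => ⟨0, y, by simp⟩
  shift := by simp
  bd := by
    intro k r hr
    simp only [powIdeal, List.map_nil, Ideal.ofList_nil, Ideal.mem_bot] at hr
    exact ⟨0, by simp [hr]⟩
  zero := by
    rintro M _ _ k m ⟨z, hz⟩
    have : m = 0 := by
      have := congrArg (TensorProduct.lid R M) hz
      simpa using this.symm
    exact ⟨0, by simp [this]⟩
  artin := by
    intro M _ _ _ h
    have hM : IsArtinian R M :=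
      isArtinian_of_le_radical_annihilator M (by simpa using h)
    have : IsArtinian R (R ⊗[R] M) := isArtinian_of_linearEquiv (TensorProduct.lid R M).symm
    infer_instance

end CechModel

lemma flat_prod {R : Type*} [CommRing R] (K L : Type*) [AddCommGroup K] [Module R K]
    [AddCommGroup L] [Module R L] [Module.Flat R K] [Module.Flat R L] :
    Module.Flat R (K × L) := by
  rw [Module.Flat.iff_rTensor_injective']
  intro I
  rw [injective_iff_map_eq_zero]
  intro z hz
  have hc : ∀ z : I ⊗[R] (K × L), TensorProduct.prodRight R R R K L (I.subtype.rTensor (K × L) z) =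
      Prod.map (I.subtype.rTensor K) (I.subtype.rTensor L)
        (TensorProduct.prodRight R R I K L z) := by
    intro z
    induction z using TensorProduct.induction_on with
    | zero => simp [Prod.map]; rfl
    | tmul y m => rfl
    | add x y hx hy => simp only [map_add, hx, hy]; simp [Prod.map]
  refine (TensorProduct.prodRight R R I K L).injective ?_
  have h := hc z
  rw [hz, map_zero] at h
  rw [map_zero]
  refine Prod.ext ?_ ?_
  · refine Module.Flat.rTensor_preserves_injective_linearMap (M := K) I.subtype
      Subtype.val_injective ?_
    rw [Prod.fst_zero, map_zero]
    exact (congrArg Prod.fst h).symm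
  · refine Module.Flat.rTensor_preserves_injective_linearMap (M := L) I.subtype
      Subtype.val_injective ?_
    rw [Prod.snd_zero, map_zero]
    exact (congrArg Prod.snd h).symm

section Functor
variable {R : Type*} [CommRing R] {K : Type*} [AddCommGroup K] [Module R K]
  (δ : K →ₗ[R] K) {A B C : Type*} [AddCommGroup A] [Module R A] [AddCommGroup B] [Module R B]
  [AddCommGroup C] [Module R C]

lemma rTensor_lTensor_comm (g : A →ₗ[R] B) (x : K ⊗[R] A) :
    δ.rTensor B (g.lTensor K x) = g.lTensor K (δ.rTensor A x) := by
  rw [← LinearMap.comp_apply, ← LinearMap.comp_apply, LinearMap.rTensor_comp_lTensor,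
    LinearMap.lTensor_comp_rTensor]

/-- For flat `K`, the kernel of multiplication by `a` on `H(K ⊗ A)` is Artinian as soon as the
homologies with coefficients in `ker a` and `A / aA` are: factor `a` as `A ↠ aA ↪ A` and use the
two long exact sequences. -/
lemma isArtinian_ker_smul_homol [Module.Flat R K] (hδ : ∀ x, δ (δ x) = 0) (a : R)
    (hA : IsArtinian R (Homol (δ.rTensor (LinearMap.ker (LinearMap.lsmul R A a)))))
    (hC : IsArtinian R (Homol (δ.rTensor (A ⧸ LinearMap.range (LinearMap.lsmul R A a))))) :
    IsArtinian R (LinearMap.ker (LinearMap.lsmul R (Homol (δ.rTensor A)) a)) := by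
  have hδ' : ∀ (X : Type _) [AddCommGroup X] [Module R X] (x : K ⊗[R] X),
      δ.rTensor X (δ.rTensor X x) = 0 := by
    intro X _ _ x
    rw [← LinearMap.comp_apply, ← LinearMap.rTensor_comp,
      show δ ∘ₗ δ = 0 from LinearMap.ext hδ]
    simp
  let m := LinearMap.lsmul R A a
  let φ := m.rangeRestrict.lTensor K
  let ψ := (LinearMap.range m).subtype.lTensor K
  have h1 := Homol.isArtinian_ker_map_of_exact ((LinearMap.ker m).subtype.lTensor K) φ
    (rTensor_lTensor_comm δ _) (rTensor_lTensor_comm δ _) (hδ' A)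
    (Module.Flat.lTensor_preserves_injective_linearMap _ (Submodule.subtype_injective _))
    (lTensor_exact K (by
      rw [LinearMap.exact_iff, LinearMap.ker_rangeRestrict, Submodule.range_subtype])
      m.surjective_rangeRestrict)
    (LinearMap.lTensor_surjective K m.surjective_rangeRestrict) hA
  have h2 := Homol.isArtinian_ker_map_of_exact' ψ ((LinearMap.range m).mkQ.lTensor K)
    (rTensor_lTensor_comm δ _) (rTensor_lTensor_comm δ _) (hδ' A)
    (Module.Flat.lTensor_preserves_injective_linearMap _ (Submodule.subtype_injective _))
    (lTensor_exact K (by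
      rw [LinearMap.exact_iff, Submodule.ker_mkQ, Submodule.range_subtype])
      (Submodule.mkQ_surjective _))
    (LinearMap.lTensor_surjective K (Submodule.mkQ_surjective _)) hC
  have h3 := isArtinian_ker_comp _ _ h1 h2
  have h4 : Homol.map ψ (rTensor_lTensor_comm δ _) ∘ₗ Homol.map φ (rTensor_lTensor_comm δ _) =
      LinearMap.lsmul R (Homol (δ.rTensor A)) a := by
    refine LinearMap.ext fun z => ?_
    obtain ⟨x, hx, rfl⟩ := z.mk_surj
    have : ψ (φ x) = a • x := by
      rw [← LinearMap.comp_apply, ← LinearMap.lTensor_comp, LinearMap.subtype_comp_codRestrict,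
        show m = a • LinearMap.id from rfl, LinearMap.lTensor_smul, LinearMap.lTensor_id]
      rfl
    rw [LinearMap.comp_apply, Homol.map_mk, Homol.map_mk, LinearMap.lsmul_apply, Homol.smul_mk,
      Homol.mk_eq_mk]
    exact ⟨0, by rw [this, sub_self, map_zero]⟩
  rwa [h4] at h3
end Functor


/-! ### Adding one element to the Čech complex -/

namespace CechModel
section Cons
variable {R : Type u} [CommRing R] [IsLocalRing R] {l : List R} (C : CechModel.{u, v} l) (a : R)
  (S : Type u) [CommRing S] [Algebra R S] [IsLocalization.Away a S]

/-- The localization `K_a` of the complex. -/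
abbrev LocK : Type u := S ⊗[R] C.K

/-- The localization map `K → K_a`. -/
abbrev toLoc : C.K →ₗ[R] C.LocK S := TensorProduct.mk R S C.K 1

/-- The differential of the Čech complex of `a :: l`, the cone of `K → K_a`. -/
abbrev consδ : C.K × C.LocK S →ₗ[R] C.K × C.LocK S :=
  coneDiff C.δ (C.δ.lTensor S) (C.toLoc S)

/-- The element `1 / (a · l.prod) ^ k` of the top degree of the Čech complex of `a :: l`. -/
noncomputable def consτ (k : ℕ) : C.K × C.LocK S :=
  (0, (IsLocalization.Away.invSelf a ^ k : S) ⊗ₜ C.τ k)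

lemma smul_inv_pow (k s : ℕ) :
    a ^ s • (IsLocalization.Away.invSelf a ^ (k + s) : S) =
      IsLocalization.Away.invSelf a ^ k := by
  rw [Algebra.smul_def, map_pow, pow_add, mul_left_comm, ← mul_pow,
    IsLocalization.Away.mul_invSelf, one_pow, mul_one]

lemma locK_surj (w : C.LocK S) :
    ∃ (j : ℕ) (y : C.K), w = (IsLocalization.Away.invSelf a ^ j : S) ⊗ₜ y := by
  obtain ⟨⟨y, ⟨_, j, rfl⟩⟩, hw⟩ := IsLocalizedModule.surj (Submonoid.powers a) (C.toLoc S) w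
  refine ⟨j, y, IsLocalizedModule.smul_injective (C.toLoc S) (⟨a ^ j, j, rfl⟩ : Submonoid.powers a) ?_⟩
  simp only [Submonoid.smul_def] at hw ⊢
  have := smul_inv_pow a S 0 j
  rw [zero_add, pow_zero] at this
  rw [hw, TensorProduct.smul_tmul', this]
  rfl

variable (M : Type v) [AddCommGroup M] [Module R M]

lemma cons_rTensor (z : (C.K × C.LocK S) ⊗[R] M) :
    TensorProduct.prodLeft R R _ _ M ((C.consδ S).rTensor M z) =
      coneDiff (C.δ.rTensor M) ((C.δ.lTensor S).rTensor M)
        ((C.toLoc S).rTensor M) (TensorProduct.prodLeft R R _ _ M z) := by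
  induction z using TensorProduct.induction_on with
  | zero => simp
  | tmul y m =>
    obtain ⟨u, w⟩ := y
    rw [LinearMap.rTensor_tmul, coneDiff_apply, TensorProduct.prodLeft_tmul,
      TensorProduct.prodLeft_tmul, coneDiff_apply, TensorProduct.sub_tmul]
    rfl
  | add x y hx hy => simp only [map_add, hx, hy]

instance isLocalizedModule_rTensor :
    IsLocalizedModule (Submonoid.powers a) ((C.toLoc S).rTensor M) :=
  inferInstanceAs (IsLocalizedModule (Submonoid.powers a)
    (TensorProduct.AlgebraTensorModule.rTensor R M (C.toLoc S)))

lemma toLoc_δ (y : C.K ⊗[R] M) :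
    (C.δ.lTensor S).rTensor M ((C.toLoc S).rTensor M y) =
      (C.toLoc S).rTensor M (C.δ.rTensor M y) := by
  simp only [← LinearMap.comp_apply, ← LinearMap.rTensor_comp]
  congr 2

lemma lTensor_δ_δ (w : C.LocK S) : C.δ.lTensor S
    (C.δ.lTensor S w) = 0 := by
  rw [← LinearMap.comp_apply, ← LinearMap.lTensor_comp,
    show C.δ ∘ₗ C.δ = 0 from LinearMap.ext C.δ_δ]
  simp

lemma consδ_consδ (y : C.K × C.LocK S) : C.consδ S (C.consδ S y) = 0 :=
  coneDiff_comp _ _ _ C.δ_δ (C.lTensor_δ_δ S) (fun _ => rfl) y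

/-- If the class of `τ k ⊗ m` vanishes for `a :: l`, then clearing the powers of `a` in the
denominators yields a vanishing top-degree class for `l`, hence the limit closure relation. -/
lemma cons_zero (k : ℕ) (m : M) (h : ∃ z, (C.consδ S).rTensor M z = C.consτ a S k ⊗ₜ m) :
    Lim (a :: l) k m := by
  obtain ⟨z, hz⟩ := h
  have h1 := C.cons_rTensor S M z
  rw [hz] at h1
  generalize TensorProduct.prodLeft R R _ _ M z = uw at h1
  obtain ⟨u, w⟩ := uw
  rw [coneDiff_apply, consτ, TensorProduct.prodLeft_tmul, Prod.mk.injEq] at h1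
  obtain ⟨-, h1⟩ := h1
  obtain ⟨⟨w0, ⟨_, j, rfl⟩⟩, hw⟩ :=
    IsLocalizedModule.surj (Submonoid.powers a) ((C.toLoc S).rTensor M) w
  simp only [Submonoid.smul_def] at hw
  have h2 : a ^ k • ((IsLocalization.Away.invSelf a ^ k : S) ⊗ₜ[R] C.τ k) ⊗ₜ[R] m
      = (C.toLoc S).rTensor M (C.τ k ⊗ₜ m) := by
    have := smul_inv_pow a S 0 k
    rw [zero_add, pow_zero] at this
    rw [TensorProduct.smul_tmul', TensorProduct.smul_tmul', this]
    rfl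
  have h3 : (C.toLoc S).rTensor M (a ^ j • (C.τ k ⊗ₜ m)) =
      (C.toLoc S).rTensor M (a ^ (k + j) • u - a ^ k • C.δ.rTensor M w0) := by
    rw [map_smul, ← h2, h1, map_sub, map_smul, map_smul, ← toLoc_δ, ← hw, map_smul, pow_add,
      mul_comm, mul_smul, smul_sub, smul_sub, smul_comm (a ^ k) (a ^ j)]
  obtain ⟨⟨_, r, rfl⟩, hr⟩ := (IsLocalizedModule.eq_iff_exists (Submonoid.powers a)
    ((C.toLoc S).rTensor M)).1 h3
  simp only [Submonoid.smul_def] at hr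
  have h4 := congrArg (C.e.rTensor M) hr
  obtain ⟨s, q, hq⟩ := C.rTensor_gen_ge k u
  simp only [map_smul, map_sub, LinearMap.rTensor_tmul, C.e_τ, C.rTensor_e_δ, hq] at h4
  obtain ⟨v, hv⟩ := C.zero M (k + s) (a ^ (r + j) • l.prod ^ s • m - a ^ (r + j + k) • q)
    ⟨-(a ^ (r + k) • C.f.rTensor M w0), by
      rw [TensorProduct.tmul_sub, TensorProduct.tmul_smul, ← C.tmul_shift k s,
        TensorProduct.tmul_smul, pow_add a r j, mul_smul, h4, map_neg, map_smul]
      simp only [smul_sub, smul_smul, ← pow_add]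
      rw [show r + (k + j) = r + j + k by ring]
      abel⟩
  refine ⟨r + j + s + v, ?_⟩
  have h5 := Submodule.smul_mem _ (a ^ (s + v)) (prod_pow_smul_mem l _ (r + j) hv)
  have h6 : a ^ (k + (r + j + s + v)) • (l.prod ^ (r + j + v) • q) ∈
      Ideal.span {a ^ (k + (r + j + s + v))} • (⊤ : Submodule R M) :=
    Submodule.smul_mem_smul (Ideal.mem_span_singleton_self _) trivial
  rw [powIdeal_cons, Submodule.sup_smul, List.prod_cons]
  rw [show k + s + v + (r + j) = k + (r + j + s + v) by ring] at h5
  convert add_mem (Submodule.mem_sup_right h5) (Submodule.mem_sup_left h6) using 1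
  simp only [smul_sub, smul_smul]
  rw [mul_pow, show a ^ (s + v) * (l.prod ^ (r + j) * (l.prod ^ v * a ^ (r + j + k))) =
    a ^ (k + (r + j + s + v)) * l.prod ^ (r + j + v) by ring, sub_add_cancel]
  congr 1
  ring

/-- The cone of `K ⊗ M → K_a ⊗ M`. -/
abbrev consδM : (C.K ⊗[R] M) × (C.LocK S ⊗[R] M) →ₗ[R] (C.K ⊗[R] M) × (C.LocK S ⊗[R] M) :=
  coneDiff (D := C.K ⊗[R] M) (E := C.LocK S ⊗[R] M) (C.δ.rTensor M)
    ((C.δ.lTensor S).rTensor M) ((C.toLoc S).rTensor M)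

/-- The comparison of the homology of `(cone of K → K_a) ⊗ M` with that of the cone of
`K ⊗ M → K_a ⊗ M`. -/
noncomputable def consHomolMap : Homol (D := (C.K × C.LocK S) ⊗[R] M) ((C.consδ S).rTensor M) →ₗ[R]
    Homol (D := (C.K ⊗[R] M) × (C.LocK S ⊗[R] M)) (C.consδM S M) :=
  Homol.map (A := (C.K × C.LocK S) ⊗[R] M) (B := (C.K ⊗[R] M) × (C.LocK S ⊗[R] M))
    (TensorProduct.prodLeft R R C.K (C.LocK S) M).toLinearMap
    (fun z => (C.cons_rTensor S M z).symm)

lemma consHomolMap_injective : Function.Injective (C.consHomolMap S M) := by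
  rw [injective_iff_map_eq_zero]
  intro z hz
  obtain ⟨x, hx, rfl⟩ := z.mk_surj
  rw [consHomolMap, Homol.map_mk, Homol.mk_eq_zero] at hz
  obtain ⟨y, hy⟩ := hz
  rw [Homol.mk_eq_zero]
  refine ⟨(TensorProduct.prodLeft R R C.K (C.LocK S) M).symm y,
    (TensorProduct.prodLeft R R C.K (C.LocK S) M).injective ?_⟩
  rw [C.cons_rTensor S M, LinearEquiv.apply_symm_apply]
  exact hy

lemma consHomolMap_surjective : Function.Surjective (C.consHomolMap S M) := by
  intro z
  obtain ⟨x, hx, rfl⟩ := z.mk_surj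
  refine ⟨Homol.mk (A := (C.K × C.LocK S) ⊗[R] M) ((TensorProduct.prodLeft R R C.K (C.LocK S) M).symm x)
    ((TensorProduct.prodLeft R R C.K (C.LocK S) M).injective ?_), ?_⟩
  · rw [C.cons_rTensor S M, LinearEquiv.apply_symm_apply, map_zero]
    exact hx
  · rw [consHomolMap, Homol.map_mk, Homol.mk_eq_mk]
    exact ⟨0, by simp⟩

/-- When `a` kills `M`, the localization at `a` vanishes and the cone has the homology of
`K ⊗ M`. -/
lemma cons_artin_of_smul_eq_zero [Module.Finite R M] (ha : ∀ m : M, a • m = 0)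
    (h : IsLocalRing.maximalIdeal R ≤ (Module.annihilator R M ⊔ Ideal.ofList l).radical) :
    IsArtinian R (Homol (D := (C.K × C.LocK S) ⊗[R] M) ((C.consδ S).rTensor M)) := by
  have hz : ∀ u : C.K ⊗[R] M, a • u = 0 := by
    intro u
    induction u using TensorProduct.induction_on with
    | zero => simp
    | tmul y m => rw [← TensorProduct.tmul_smul, ha, TensorProduct.tmul_zero]
    | add x y hx hy => rw [smul_add, hx, hy, add_zero]
  have hsub : Subsingleton (C.LocK S ⊗[R] M) := by
    refine subsingleton_of_forall_eq 0 fun w => ?_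
    obtain ⟨⟨w0, s⟩, hw⟩ :=
      IsLocalizedModule.surj (Submonoid.powers a) ((C.toLoc S).rTensor M) w
    simp only at hw
    refine IsLocalizedModule.smul_injective ((C.toLoc S).rTensor M) s ?_
    refine IsLocalizedModule.smul_injective ((C.toLoc S).rTensor M)
      (⟨a, 1, pow_one a⟩ : Submonoid.powers a) ?_
    simp only [hw, smul_zero]
    rw [Submonoid.smul_def]
    simp only
    rw [← map_smul, hz, map_zero]
  have : IsArtinian R (Homol (D := (C.K ⊗[R] M) × (C.LocK S ⊗[R] M)) (C.consδM S M)) :=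
    cone_isArtinian_of_subsingleton (E := C.LocK S ⊗[R] M) _ _ _ (C.artin M h)
  exact isArtinian_of_injective _ (C.consHomolMap_injective S M)

lemma cons_torsion (z : Homol (D := (C.K × C.LocK S) ⊗[R] M) ((C.consδ S).rTensor M)) :
    ∃ k : ℕ, a ^ k • z = 0 := by
  have h : ∀ y : Homol (D := (C.K ⊗[R] M) × (C.LocK S ⊗[R] M)) (C.consδM S M),
      ∃ k : ℕ, a ^ k • y = 0 :=
    cone_torsion (D := C.K ⊗[R] M) (E := C.LocK S ⊗[R] M) _ _ _ a (C.toLoc_δ S M)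
  obtain ⟨k, hk⟩ := h (C.consHomolMap S M z)
  refine ⟨k, C.consHomolMap_injective S M ?_⟩
  rw [map_smul, hk, map_zero]

/-- The homology is `a`-power torsion, so Melkersson's criterion reduces the claim to modules
killed by `a`. -/
lemma cons_artin [IsNoetherianRing R] [Module.Finite R M]
    (h : IsLocalRing.maximalIdeal R ≤ (Module.annihilator R M ⊔ Ideal.ofList (a :: l)).radical) :
    IsArtinian R (Homol (D := (C.K × C.LocK S) ⊗[R] M) ((C.consδ S).rTensor M)) := by
  have hflat : Module.Flat R S := IsLocalization.flat S (Submonoid.powers a)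
  have hflat' : Module.Flat R (C.K × C.LocK S) := flat_prod _ _
  refine isArtinian_of_torsion a (C.cons_torsion a S M) ?_
  have key : ∀ (X : Type v) [AddCommGroup X] [Module R X] [Module.Finite R X],
      Module.annihilator R M ≤ Module.annihilator R X → (∀ x : X, a • x = 0) →
      IsArtinian R (Homol (D := (C.K × C.LocK S) ⊗[R] X) ((C.consδ S).rTensor X)) := by
    intro X _ _ _ hle ha
    refine C.cons_artin_of_smul_eq_zero a S X ha (h.trans (Ideal.radical_mono ?_))
    rw [Ideal.ofList_cons, ← sup_assoc]
    refine sup_le_sup_right (sup_le hle ?_) _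
    rw [Ideal.span_singleton_le_iff_mem, Module.mem_annihilator]
    exact ha
  refine isArtinian_ker_smul_homol (K := C.K × C.LocK S) (C.consδ S) (C.consδ_consδ S) a
    (key _ ?_ ?_) (key _ ?_ ?_)
  · exact LinearMap.annihilator_le_of_injective _ (Submodule.subtype_injective _)
  · rintro ⟨x, hx⟩
    exact Subtype.ext hx
  · exact LinearMap.annihilator_le_of_surjective _ (Submodule.mkQ_surjective _)
  · intro x
    obtain ⟨x, rfl⟩ := Submodule.mkQ_surjective _ x
    rw [← map_smul, Submodule.mkQ_apply, Submodule.Quotient.mk_eq_zero]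
    exact ⟨x, rfl⟩

/-- The Čech complex of `a :: l`, built as the cone of `K → K_a`. -/
noncomputable def cons [IsNoetherianRing R] : CechModel.{u, v} (a :: l) where
  K := C.K × C.LocK S
  flat := by
    have hflat : Module.Flat R S := IsLocalization.flat S (Submonoid.powers a)
    exact flat_prod _ _
  δ := C.consδ S
  e := LinearMap.inr R _ _ ∘ₗ C.e.lTensor S ∘ₗ LinearMap.snd R _ _
  f := C.e.prodMap (C.f.lTensor S)
  τ := C.consτ a S
  δ_δ := C.consδ_consδ S
  δ_e := by
    rintro ⟨u, w⟩
    have : C.δ.lTensor S (C.e.lTensor S w) = 0 := by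
      rw [← LinearMap.comp_apply, ← LinearMap.lTensor_comp,
        show C.δ ∘ₗ C.e = 0 from LinearMap.ext C.δ_e]
      simp
    simp only [LinearMap.comp_apply, LinearMap.snd_apply, LinearMap.inr_apply]
    rw [coneDiff_apply, this, map_zero, map_zero, sub_zero]
    rfl
  e_δ := by
    rintro ⟨u, w⟩
    have : C.e.lTensor S (C.δ.lTensor S w) = C.δ.lTensor S (C.f.lTensor S w) := by
      rw [← LinearMap.comp_apply, ← LinearMap.lTensor_comp,
        show C.e ∘ₗ C.δ = C.δ ∘ₗ C.f from LinearMap.ext C.e_δ, LinearMap.lTensor_comp,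
        LinearMap.comp_apply]
    rw [LinearMap.prodMap_apply, coneDiff_apply, coneDiff_apply]
    simp only [LinearMap.comp_apply, LinearMap.snd_apply, LinearMap.inr_apply]
    rw [map_sub, this, C.δ_e]
    rfl
  e_τ := by
    intro k
    simp [consτ, C.e_τ]
  gen := by
    rintro ⟨u, w⟩
    obtain ⟨j, y, rfl⟩ := C.locK_surj a S w
    obtain ⟨k, r, h⟩ := C.gen y
    refine ⟨j + k, r * (a ^ k * l.prod ^ j), ?_⟩
    simp only [LinearMap.comp_apply, LinearMap.snd_apply, LinearMap.inr_apply,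
      LinearMap.lTensor_tmul, h, consτ, Prod.smul_mk, smul_zero]
    rw [mul_smul, mul_smul, TensorProduct.tmul_smul, ← TensorProduct.tmul_smul (l.prod ^ j),
      add_comm j k, C.shift_pow, add_comm k j, TensorProduct.smul_tmul' (a ^ k), smul_inv_pow]
  shift := by
    intro k
    rw [List.prod_cons, consτ, consτ, Prod.smul_mk, smul_zero, mul_smul,
      ← TensorProduct.tmul_smul l.prod, C.shift, TensorProduct.smul_tmul']
    have := smul_inv_pow a S k 1
    rw [pow_one] at this
    rw [this]
  bd := by
    intro k r hr
    rw [powIdeal_cons] at hr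
    obtain ⟨r1, hr1, r2, hr2, rfl⟩ := Submodule.mem_sup.1 hr
    obtain ⟨c, rfl⟩ := Ideal.mem_span_singleton'.1 hr1
    obtain ⟨y, hy⟩ := C.bd k r2 hr2
    refine ⟨(c • C.τ k, -((IsLocalization.Away.invSelf a ^ k : S) ⊗ₜ y)), ?_⟩
    have := smul_inv_pow a S 0 k
    rw [zero_add, pow_zero] at this
    rw [coneDiff_apply, map_smul, map_smul, C.δ_τ, smul_zero, consτ, Prod.smul_mk, smul_zero,
      map_neg, LinearMap.lTensor_tmul, hy, sub_neg_eq_add, add_smul, TensorProduct.tmul_smul,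
      mul_smul, TensorProduct.smul_tmul' (a ^ k), this]
    rfl
  zero := fun M _ _ k m h => C.cons_zero a S M k m h
  artin := fun M _ _ _ h => C.cons_artin a S M h
end Cons

/-- The Čech complex of a list over a Noetherian local ring. -/
noncomputable def ofList {R : Type u} [CommRing R] [IsLocalRing R] [IsNoetherianRing R] :
    (l : List R) → CechModel.{u, v} l
  | [] => nil
  | a :: l => (ofList l).cons a (Localization.Away a)
end CechModel

/-! ### Elements in all limit closures span a module of small dimension -/

namespace CechModel
section
variable {R : Type u} [CommRing R] [IsLocalRing R] {l : List R} (C : CechModel.{u, v} l)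
  (M : Type v) [AddCommGroup M] [Module R M]

/-- For a suitable `c`, multiplication by `a ^ c` makes each `a`-power torsion class in the
cohomology of `K ⊗ M` divisible by all powers of `a`. -/
lemma stable [IsNoetherianRing R] [Module.Finite R M] (a : R)
    (S : Type u) [CommRing S] [Algebra R S] [IsLocalization.Away a S]
    (h : IsLocalRing.maximalIdeal R ≤ (Module.annihilator R M ⊔ Ideal.ofList (a :: l)).radical) :
    ∃ c : ℕ, ∀ n r : ℕ, ∀ u : C.K ⊗[R] M, C.δ.rTensor M u = 0 →
      (∃ b, C.δ.rTensor M b = a ^ r • u) →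
      ∃ h, C.δ.rTensor M h = 0 ∧ ∃ b, C.δ.rTensor M b = a ^ c • u - a ^ n • h := by
  have h1 := C.cons_artin a S M h
  have h2 : IsArtinian R (Homol (D := (C.K ⊗[R] M) × (C.LocK S ⊗[R] M)) (C.consδM S M)) :=
    isArtinian_of_surjective _ (C.consHomolMap S M) (C.consHomolMap_surjective S M)
  exact cone_stable (D := C.K ⊗[R] M) (E := C.LocK S ⊗[R] M) _ _ _ a (C.toLoc_δ S M) h2

lemma rTensor_bd {k : ℕ} {p : M} (hp : p ∈ powIdeal l k • (⊤ : Submodule R M)) :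
    ∃ b, C.δ.rTensor M b = C.τ k ⊗ₜ p := by
  induction hp using Submodule.smul_induction_on' with
  | smul r hr n hn =>
    obtain ⟨y, hy⟩ := C.bd k r hr
    exact ⟨y ⊗ₜ n, by rw [LinearMap.rTensor_tmul, hy, TensorProduct.smul_tmul]⟩
  | add x _ y _ hx hy =>
    obtain ⟨b, hb⟩ := hx
    obtain ⟨b', hb'⟩ := hy
    exact ⟨b + b', by rw [map_add, hb, hb', TensorProduct.tmul_add]⟩
end
end CechModel

section Main
open Pointwise

lemma withBot_add_one_lt {x : WithBot ℕ∞} {n : ℕ} (h : x < (n : WithBot ℕ∞)) :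
    x + 1 < (n : WithBot ℕ∞) + 1 := by
  induction x with
  | bot => exact WithBot.bot_lt_coe _
  | coe x =>
    have h' : x < (n : ℕ∞) := by exact_mod_cast h
    have : x + 1 < (n : ℕ∞) + 1 := by
      lift x to ℕ using h'.ne_top
      exact_mod_cast Nat.succ_lt_succ (by exact_mod_cast h')
    exact_mod_cast this


/-- If `y` lies in all limit closures for `a :: l`, then modulo any power of `a` the multiple
`a ^ c • y` lies in all limit closures for `l`, with `c` independent of `y` and of the power. Indeed
the hypothesis produces an `a`-power torsion class in the top cohomology for `l`, which `a ^ c` makes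
divisible by `a ^ n`. -/
lemma lim_step {R : Type u} [CommRing R] [IsLocalRing R] [IsNoetherianRing R]
    (M : Type v) [AddCommGroup M] [Module R M] [Module.Finite R M] (a : R) (l : List R)
    (h : IsLocalRing.maximalIdeal R ≤ (Module.annihilator R M ⊔ Ideal.ofList (a :: l)).radical) :
    ∃ c : ℕ, ∀ n k : ℕ, ∀ y : M, (∀ k, Lim (a :: l) k y) → ∃ (S : ℕ) (m : M),
      l.prod ^ S • a ^ c • y - a ^ n • m ∈ powIdeal l (k + S) • (⊤ : Submodule R M) := by
  let C : CechModel.{u, v} l := CechModel.ofList l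
  obtain ⟨c, hc⟩ := C.stable M a (Localization.Away a) h
  refine ⟨c, fun n k y hy => ?_⟩
  obtain ⟨s, hs⟩ := hy (k + n)
  rw [powIdeal_cons, Submodule.sup_smul] at hs
  obtain ⟨z, hz, p, hp, hzp⟩ := Submodule.mem_sup.1 hs
  rw [Submodule.ideal_span_singleton_smul] at hz
  obtain ⟨m0, -, rfl⟩ := hz
  have hw : a ^ s • (l.prod ^ s • y - a ^ (k + n) • m0) = p := by
    rw [← eq_sub_iff_add_eq'] at hzp
    rw [hzp, List.prod_cons, mul_pow, mul_smul, smul_sub, smul_smul _ _ m0, ← pow_add,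
      add_comm s (k + n)]
    rfl
  obtain ⟨w, hwdef⟩ : ∃ w, w = l.prod ^ s • y - a ^ (k + n) • m0 := ⟨_, rfl⟩
  rw [← hwdef] at hw
  obtain ⟨g, hg, b, hb⟩ := hc n s (C.τ (k + n + s) ⊗ₜ w)
    (by rw [LinearMap.rTensor_tmul, C.δ_τ, TensorProduct.zero_tmul])
    (by rw [← TensorProduct.tmul_smul, hw]; exact C.rTensor_bd M hp)
  obtain ⟨r, q, hq⟩ := C.rTensor_gen_ge (k + n + s) g
  have h4 := congrArg (C.e.rTensor M) hb
  simp only [map_smul, map_sub, LinearMap.rTensor_tmul, C.e_τ, C.rTensor_e_δ, hq] at h4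
  obtain ⟨v, hv⟩ := C.zero M (k + n + s + r) (a ^ c • l.prod ^ r • w - a ^ n • q)
    ⟨_, h4.trans (by
      rw [TensorProduct.tmul_sub, TensorProduct.tmul_smul, ← C.tmul_shift _ r w,
        TensorProduct.tmul_smul])⟩
  refine ⟨v + r + s, l.prod ^ (v + r) • a ^ (c + k) • m0 + l.prod ^ v • q, ?_⟩
  have h5 := Submodule.smul_mono_left (N := (⊤ : Submodule R M)) (powIdeal_anti l
    (show k + (v + r + s) ≤ k + n + s + r + v by omega)) hv
  convert h5 using 1
  rw [hwdef]
  module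

lemma maximal_le_radical_quot {R : Type u} [CommRing R] [IsLocalRing R]
    (M : Type v) [AddCommGroup M] [Module R M] (a : R) (l : List R)
    {b : R} (n : ℕ) (hb : b = a ^ n)
    (h : IsLocalRing.maximalIdeal R ≤ (Module.annihilator R M ⊔ Ideal.ofList (a :: l)).radical) :
    IsLocalRing.maximalIdeal R ≤
      (Module.annihilator R (QuotSMulTop b M) ⊔ Ideal.ofList l).radical := by
  subst hb
  refine h.trans (Ideal.radical_le_radical_iff.2 ?_)
  rw [Ideal.ofList_cons]
  refine sup_le ?_ (sup_le ?_ ?_)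
  · exact ((LinearMap.annihilator_le_of_surjective _ (Submodule.mkQ_surjective _)).trans
      le_sup_left).trans Ideal.le_radical
  · rw [Ideal.span_singleton_le_iff_mem]
    refine ⟨n, Ideal.mem_sup_left ?_⟩
    rw [Module.mem_annihilator]
    intro x
    obtain ⟨x, rfl⟩ := Submodule.mkQ_surjective _ x
    rw [← map_smul, Submodule.mkQ_apply, Submodule.Quotient.mk_eq_zero]
    exact Submodule.smul_mem_pointwise_smul _ _ _ trivial
  · exact le_sup_right.trans Ideal.le_radical

lemma supportDim_le_length {R : Type u} [CommRing R] [IsLocalRing R] [IsNoetherianRing R]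
    (l : List R) (hl : ∀ a ∈ l, a ∈ IsLocalRing.maximalIdeal R)
    (M : Type v) [AddCommGroup M] [Module R M] [Module.Finite R M]
    (h : IsLocalRing.maximalIdeal R ≤ (Module.annihilator R M ⊔ Ideal.ofList l).radical) :
    Module.supportDim R M ≤ (l.length : WithBot ℕ∞) := by
  induction l generalizing M with
  | nil =>
    have h0 := krullDimLE_zero_quotient_annihilator M (by simpa using h)
    rw [Module.supportDim_eq_ringKrullDim_quotient_annihilator]
    simpa [Ring.krullDimLE_iff] using h0
  | cons a l ih =>
    refine (Module.supportDim_le_supportDim_quotSMulTop_succ (hl a (by simp))).trans ?_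
    have := ih (fun b hb => hl b (by simp [hb])) (QuotSMulTop a M)
      (maximal_le_radical_quot M a l 1 (pow_one a).symm h)
    simpa using add_le_add_left this 1

/-- A module that is a quotient of the image of `g` has at most the dimension of that image. -/
lemma supportDim_le_of_ker_le {R : Type u} [CommRing R] {X Y Z : Type*} [AddCommGroup X] [Module R X] [AddCommGroup Y]
    [Module R Y] [AddCommGroup Z] [Module R Z] (g : X →ₗ[R] Y) (h : X →ₗ[R] Z)
    (hh : Function.Surjective h) (hk : LinearMap.ker g ≤ LinearMap.ker h) :
    Module.supportDim R Z ≤ Module.supportDim R (LinearMap.range g) := by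
  refine (Module.supportDim_le_of_surjective ((LinearMap.ker g).liftQ h hk) ?_).trans
    (Module.supportDim_eq_of_equiv g.quotKerEquivRange).le
  intro z
  obtain ⟨x, rfl⟩ := hh z
  exact ⟨Submodule.Quotient.mk x, by simp⟩

/-- A submodule all of whose elements lie in every limit closure of a sequence `l` with `M / lM` of
finite length has dimension less than `l.length`.

Induction on `l`. For `a :: l`, put `Q = a ^ c N`; the image of `Q` in `M / a ^ n M` satisfies the
hypothesis for `l`, and for large `n` it surjects onto `Q / aQ` by Artin–Rees. Hence
`dim Q ≤ l.length`. A chain of primes of length `l.length + 1` in the support of `N` therefore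
cannot start at a prime avoiding `a`, and cannot start at one containing `a` because
`dim M / aM ≤ l.length`. -/
theorem supportDim_lt_of_lim {R : Type u} [CommRing R] [IsLocalRing R] [IsNoetherianRing R]
    (l : List R) (hl : ∀ a ∈ l, a ∈ IsLocalRing.maximalIdeal R)
    (M : Type v) [AddCommGroup M] [Module R M] [Module.Finite R M]
    (h : IsLocalRing.maximalIdeal R ≤ (Module.annihilator R M ⊔ Ideal.ofList l).radical)
    (N : Submodule R M) (hN : ∀ y ∈ N, ∀ k, Lim l k y) :
    Module.supportDim R N < (l.length : WithBot ℕ∞) := by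
  induction l generalizing M with
  | nil =>
    have : Subsingleton N := by
      refine subsingleton_of_forall_eq 0 fun y => ?_
      obtain ⟨s, hs⟩ := hN y y.2 0
      simpa [powIdeal] using hs
    rw [Module.supportDim_eq_bot_of_subsingleton]
    exact WithBot.bot_lt_coe _
  | cons a l ih =>
    obtain ⟨c, hc⟩ := lim_step M a l h
    obtain ⟨k, hk⟩ := Ideal.exists_pow_inf_eq_pow_smul (Ideal.span {a}) N
    -- this choice of `n` gives `a ^ n M ∩ N ⊆ a ^ (c + 1) N = a Q`
    let n := k + c + 1
    let Q : Submodule R M := N.map (LinearMap.lsmul R M (a ^ c))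
    have hQN : Q ≤ N := by
      rintro _ ⟨y, hy, rfl⟩
      exact N.smul_mem _ hy
    let g : Q →ₗ[R] QuotSMulTop (a ^ n) M := (Submodule.mkQ _) ∘ₗ Q.subtype
    have h1 : Module.supportDim R (LinearMap.range g) < (l.length : WithBot ℕ∞) := by
      refine ih (fun b hb => hl b (by simp [hb])) (QuotSMulTop (a ^ n) M)
        (maximal_le_radical_quot M a l n rfl h) _ ?_
      rintro _ ⟨⟨_, y, hy, rfl⟩, rfl⟩ k
      obtain ⟨s, m, hm⟩ := hc n k y (hN y hy)
      refine ⟨s, ?_⟩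
      have := Submodule.mem_map_of_mem
        (f := Submodule.mkQ ((a ^ n) • (⊤ : Submodule R M))) hm
      rw [Submodule.map_smul'', Submodule.map_top, Submodule.range_mkQ, map_sub, map_smul] at this
      have h0 : (Submodule.mkQ ((a ^ n) • (⊤ : Submodule R M))) (a ^ n • m) = 0 := by
        rw [Submodule.mkQ_apply, Submodule.Quotient.mk_eq_zero]
        exact Submodule.smul_mem_pointwise_smul _ _ _ trivial
      rw [h0, sub_zero] at this
      exact this
    have h2 : Module.supportDim R (QuotSMulTop a Q) ≤ Module.supportDim R (LinearMap.range g) := by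
      refine supportDim_le_of_ker_le g (Submodule.mkQ _) (Submodule.mkQ_surjective _) ?_
      rintro ⟨y, hy⟩ hyg
      have hyn : y ∈ a ^ n • (⊤ : Submodule R M) := by
        simpa [g] using hyg
      have hmem : y ∈ Ideal.span {a} ^ n • (⊤ : Submodule R M) ⊓ N := by
        refine ⟨?_, hQN hy⟩
        rwa [Ideal.span_singleton_pow, Submodule.ideal_span_singleton_smul]
      rw [hk n (by omega), show n - k = c + 1 by omega, Ideal.span_singleton_pow,
        Submodule.ideal_span_singleton_smul] at hmem
      obtain ⟨z, hz, hzy⟩ := hmem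
      rw [LinearMap.mem_ker, Submodule.mkQ_apply, Submodule.Quotient.mk_eq_zero]
      refine ⟨⟨a ^ c • z, z, hz.2, rfl⟩, trivial, Subtype.ext ?_⟩
      change a • a ^ c • z = y
      rw [← hzy, smul_smul, ← pow_succ']
      rfl
    have h3 : Module.supportDim R Q < ((l.length + 1 : ℕ) : WithBot ℕ∞) := by
      refine (Module.supportDim_le_supportDim_quotSMulTop_succ (hl a (by simp))).trans_lt ?_
      push_cast
      exact withBot_add_one_lt (h2.trans_lt h1)
    have h4 : Module.supportDim R (QuotSMulTop a M) ≤ (l.length : WithBot ℕ∞) :=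
      supportDim_le_length l (fun b hb => hl b (by simp [hb])) (QuotSMulTop a M)
        (maximal_le_radical_quot M a l 1 (pow_one a).symm h)
    by_contra hcon
    rw [not_lt, List.length_cons] at hcon
    obtain ⟨s, hs⟩ := Order.le_krullDim_iff.1 hcon
    by_cases ha : a ∈ s.head.1.asIdeal
    · let t : LTSeries (Module.support R (QuotSMulTop a M)) :=
        { length := s.length
          toFun := fun i => ⟨(s i).1, by
            rw [Module.support_quotSMulTop]
            refine ⟨Module.support_subset_of_injective N.subtype N.subtype_injective (s i).2, ?_⟩
            rw [PrimeSpectrum.mem_zeroLocus, Set.singleton_subset_iff]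
            exact (LTSeries.head_le s i : s.head.1 ≤ (s i).1) ha⟩
          step := fun i => s.step i }
      have := Order.LTSeries.length_le_krullDim t
      have h5 := this.trans h4
      rw [show t.length = l.length + 1 from hs] at h5
      exact absurd (by exact_mod_cast h5 : l.length + 1 ≤ l.length) (by omega)
    · have hQ : s.head.1 ∈ Module.support R Q := by
        obtain ⟨m, hm⟩ := Module.mem_support_iff'.1 s.head.2
        rw [Module.mem_support_iff']
        refine ⟨⟨a ^ c • (m : M), m, m.2, rfl⟩, fun r hr h0 => ?_⟩
        refine hm (r * a ^ c) (fun hra => ?_) (Subtype.ext ?_)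
        · rcases s.head.1.2.mem_or_mem hra with h' | h'
          · exact hr h'
          · exact ha (s.head.1.2.mem_of_pow_mem _ h')
        · have := congrArg Subtype.val h0
          rw [mul_smul]
          exact this
      let t : LTSeries (Module.support R Q) :=
        { length := s.length
          toFun := fun i => ⟨(s i).1, Module.mem_support_mono
            (LTSeries.head_le s i : s.head.1 ≤ (s i).1) hQ⟩
          step := fun i => s.step i }
      have := Order.LTSeries.length_le_krullDim t
      rw [show t.length = l.length + 1 from hs] at this
      exact absurd h3 (not_lt.2 this)
end Main

/-! ### Limit closures of a system of parameters -/

section Final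
variable {R : Type u} [CommRing R]

lemma powIdeal_ofFn {r : ℕ} (x : Fin r → R) (k : ℕ) :
    powIdeal (List.ofFn x) k = Ideal.span (Set.range fun i => x i ^ k) := by
  rw [powIdeal, List.map_ofFn, Ideal.ofList]
  congr 1
  ext z
  simp [List.mem_ofFn]

lemma powIdeal_ofFn_pow {r : ℕ} (x : Fin r → R) (n k : ℕ) :
    powIdeal (List.ofFn fun i => x i ^ n) k = powIdeal (List.ofFn x) (n * k) := by
  simp [powIdeal_ofFn, pow_mul]

lemma mem_limitClosure_iff {M : Type v} [AddCommGroup M] [Module R M] {r : ℕ} (x : Fin r → R)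
    (m : M) : m ∈ limitClosure (M := M) x ↔ Lim (List.ofFn x) 1 m := by
  have hmono : Monotone fun n : ℕ =>
      (Ideal.span (Set.range fun i => x i ^ (n + 2)) • (⊤ : Submodule R M)).comap
        (LinearMap.lsmul R M ((∏ i, x i) ^ (n + 1))) := by
    refine monotone_nat_of_le_succ fun n y hy => ?_
    simp only [Submodule.mem_comap, LinearMap.lsmul_apply, ← powIdeal_ofFn,
      ← List.prod_ofFn] at hy ⊢
    have := prod_pow_smul_mem _ _ 1 hy
    rwa [smul_smul, pow_one, ← pow_succ', add_right_comm] at this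
  rw [limitClosure, Submodule.mem_iSup_of_directed _ hmono.directed_le]
  simp only [Submodule.mem_comap, LinearMap.lsmul_apply, ← powIdeal_ofFn, ← List.prod_ofFn]
  constructor
  · rintro ⟨n, hn⟩
    exact ⟨n + 1, by rwa [show 1 + (n + 1) = n + 2 by omega]⟩
  · rintro ⟨s, hs⟩
    refine ⟨s, ?_⟩
    have := prod_pow_smul_mem _ _ 1 hs
    rwa [smul_smul, pow_one, ← pow_succ', show 1 + s + 1 = s + 2 by omega] at this

lemma maximalIdeal_le_radical_annihilator [IsLocalRing R] (X : Type v) [AddCommGroup X]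
    [Module R X] (h : IsFiniteLength R X) :
    maximalIdeal R ≤ (Module.annihilator R X).radical := by
  obtain ⟨hN, hA⟩ := isFiniteLength_iff_isNoetherian_isArtinian.1 h
  obtain ⟨n, hn⟩ := monotone_stabilizes_iff_artinian.2 hA
    ⟨fun n => OrderDual.toDual (maximalIdeal R ^ n • (⊤ : Submodule R X)), fun i j hij =>
      Submodule.smul_mono_left (Ideal.pow_le_pow_right hij)⟩
  have h1 : maximalIdeal R ^ n • (⊤ : Submodule R X) =
      maximalIdeal R ^ (n + 1) • (⊤ : Submodule R X) := hn (n + 1) (by omega)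
  have h2 : maximalIdeal R ^ n • (⊤ : Submodule R X) = ⊥ := by
    refine Submodule.eq_bot_of_le_smul_of_le_jacobson_bot (maximalIdeal R) _
      (IsNoetherian.noetherian _) ?_ (maximalIdeal_le_jacobson _)
    rw [← mul_smul, ← pow_succ', ← h1]
  intro a ha
  refine ⟨n, Module.mem_annihilator.2 fun m => ?_⟩
  have h3 : a ^ n • m ∈ maximalIdeal R ^ n • (⊤ : Submodule R X) :=
    Submodule.smul_mem_smul (Ideal.pow_mem_pow ha n) trivial
  rwa [h2, Submodule.mem_bot] at h3

/-- If `M / IM` has finite length, then `Ann M + I` is primary to the maximal ideal or the unit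
ideal, since `Supp (M / IM) = Supp M ∩ V(I)`. -/
lemma maximalIdeal_le_radical_sup [IsLocalRing R] (M : Type v) [AddCommGroup M] [Module R M]
    [Module.Finite R M] (I : Ideal R) (h : IsFiniteLength R (M ⧸ (I • (⊤ : Submodule R M)))) :
    maximalIdeal R ≤ (Module.annihilator R M ⊔ I).radical := by
  refine (maximalIdeal_le_radical_annihilator _ h).trans ?_
  refine Ideal.radical_le_radical_iff.2 ?_
  rw [← PrimeSpectrum.zeroLocus_subset_zeroLocus_iff, PrimeSpectrum.zeroLocus_sup,
    ← Module.support_eq_zeroLocus, ← Module.support_eq_zeroLocus, Module.support_quotient]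

/-- A submodule of dimension less than `l.length` lies in the limit closure of `l`, by the monomial
relation in `R / Ann U`. -/
lemma lim_of_dim_lt {M : Type v} [AddCommGroup M] [Module R M] (l : List R) (U : Submodule R M)
    (hU : ringKrullDim (R ⧸ Module.annihilator R U) < (l.length : WithBot ℕ∞)) (y : M)
    (hy : y ∈ U) : Lim l 1 y := by
  let φ := Ideal.Quotient.mk (Module.annihilator R U)
  obtain ⟨k, hk⟩ := exists_prod_pow_mem (l.map φ) (by simpa using hU)
  have hmap : powIdeal (l.map φ) (1 + k) = (powIdeal l (1 + k)).map φ := by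
    simp [powIdeal, Ideal.map_ofList, List.map_map, Function.comp_def]
  rw [hmap, ← map_list_prod, ← map_pow,
    Ideal.mem_map_iff_of_surjective _ Ideal.Quotient.mk_surjective] at hk
  obtain ⟨r, hr, hrk⟩ := hk
  have h1 := Module.mem_annihilator.1 (Ideal.Quotient.eq.1 hrk) ⟨y, hy⟩
  have h2 : r • y = l.prod ^ k • y := by
    have := congrArg Subtype.val h1
    rw [sub_smul] at this
    exact sub_eq_zero.1 this
  exact ⟨k, h2 ▸ Submodule.smul_mem_smul hr trivial⟩
end Final

/-- **Theorem A**: for a system of parameters `x` of a `d`-dimensional finitely generated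
module `M` over a Noetherian local ring, `⋂_{n>0} (x₁^n, …, x_d^n)^lim_M = U_M(0)`, where
`U_M(0)` is the unmixed component of `M`, i.e. the largest submodule of `M` of dimension
strictly less than `d`. -/
theorem intersection_limitClosure_eq_unmixed_component
    {R : Type*} [CommRing R] [IsNoetherianRing R] [IsLocalRing R]
    {M : Type*} [AddCommGroup M] [Module R M] [Module.Finite R M]
    {d : ℕ} (hd : moduleDim R M = d)
    (x : Fin d → R) (hx : IsSystemOfParameters M x)
    (U : Submodule R M) (hUdim : moduleDim R U < (d : WithBot ℕ∞))
    (hUmax : ∀ N : Submodule R M, moduleDim R N < (d : WithBot ℕ∞) → N ≤ U) :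
    (⨅ n : ℕ, limitClosure (M := M) (fun i => x i ^ (n + 1))) = U := by
  apply le_antisymm
  · refine hUmax _ ?_
    rw [moduleDim, ← Module.supportDim_eq_ringKrullDim_quotient_annihilator]
    have := supportDim_lt_of_lim (List.ofFn x) (by
      intro a ha
      obtain ⟨i, rfl⟩ := (List.mem_ofFn' x a).1 ha
      exact hx.1 i) M (by
      have h := maximalIdeal_le_radical_sup M _ hx.2
      have hI := powIdeal_ofFn x 1
      simp only [powIdeal, pow_one, List.map_id'] at hI
      rwa [hI]) (⨅ n : ℕ, limitClosure (M := M) (fun i => x i ^ (n + 1))) ?_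
    · simpa using this
    · intro y hy k
      obtain ⟨s, hs⟩ := (mem_limitClosure_iff _ _).1 ((Submodule.mem_iInf _).1 hy k)
      refine ⟨(k + 1) * s, ?_⟩
      rw [powIdeal_ofFn_pow, List.prod_ofFn, Finset.prod_pow, ← List.prod_ofFn, ← pow_mul] at hs
      exact Submodule.smul_mono_left (powIdeal_anti _ (by nlinarith)) hs
  · refine le_iInf fun n y hy => (mem_limitClosure_iff _ _).2 ?_
    exact lim_of_dim_lt _ U (by simpa [moduleDim] using hUdim) y hy
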